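/- Let d, K ≥ 1 be integers, τ = r + ν with r ∈ ℕ and ν ∈ (0,1], and B > 0. There exists a constant C > 0, depending only on d, τ and B, such that for every integer k ≥ 1 and every κ ∈ C_{τ,d,K,B} there exists a ReLU network φ : ℝ^d → ℝ^K belonging to F_{d,K}(W, D, M) with width W ≤ C · 2^{2dk/τ} · k, depth D = (k+1)(d+r) + 2, and norm constraint M ≤ C · 2^{2(d+1)k/τ}, satisfying ( ∫_{[0,1]^d} ‖κ(x) − φ(x)‖₂² dx )^{1/2} ≤ C · √K · 2^{−2k}. In particular, ‖κ − φ‖_{L²([0,1]^d)} ≲ √K · M^{−τ/(d+1)} with W ≍ M^{d/(d+1)} log M and D ≍ log M. -/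

import Mathlib

open scoped BigOperators

noncomputable section

/-- Forward pass of the hidden layers of a ReLU network, in a padded representation:
states are `ℕ → ℝ`, the matrix `W l` and bias `b l` give layer `l`, `w l` is the width
of layer `l` (only the first `w l` coordinates are fed into the next layer), and the
ReLU activation `t ↦ max 0 t` is applied after every hidden affine layer. -/
def hiddenLayers (W : ℕ → ℕ → ℕ → ℝ) (b : ℕ → ℕ → ℝ) (w : ℕ → ℕ) :
    ℕ → (ℕ → ℝ) → (ℕ → ℝ)
  | 0, x => x
  | (L + 1), x => fun i =>
      max 0 ((∑ j ∈ Finset.range (w L), W L i j * hiddenLayers W b w L x j) + b L i)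

/-- `φ : ℝ^d → ℝ^K` belongs to the norm-constrained ReLU network class
`F_{d,K}(𝒲, D, M)`: there is a ReLU network of depth `D' ≤ D`, hidden widths at most
`𝒲`, realizing `φ` as `x ↦ W_{D'} σ(W_{D'−1} σ(⋯ σ(W_0 x + b_0) ⋯) + b_{D'−1}) + b_{D'}`,
whose layer `‖(W_l, b_l)‖_{1,∞}` norms (the maximum over rows of the ℓ¹ norm of the row
of the augmented matrix `(W b)`) admit bounds `Mi l` with
`Mi D' · ∏_{l<D'} max(Mi l, 1) ≤ M`. -/
def MemNNClass (d K 𝒲 D : ℕ) (M : ℝ) (φ : (Fin d → ℝ) → Fin K → ℝ) : Prop :=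
  ∃ D' : ℕ, D' ≤ D ∧
    ∃ (w : ℕ → ℕ) (W : ℕ → ℕ → ℕ → ℝ) (b : ℕ → ℕ → ℝ) (Mi : ℕ → ℝ),
      w 0 = d ∧ w (D' + 1) = K ∧
      (∀ l : ℕ, 1 ≤ l → l ≤ D' → w l ≤ 𝒲) ∧
      (∀ l : ℕ, l ≤ D' → ∀ i : ℕ, i < w (l + 1) →
        (∑ j ∈ Finset.range (w l), |W l i j|) + |b l i| ≤ Mi l) ∧
      (∀ l : ℕ, 0 ≤ Mi l) ∧
      Mi D' * ∏ l ∈ Finset.range D', max (Mi l) 1 ≤ M ∧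
      ∀ (x : Fin d → ℝ) (i : Fin K),
        φ x i = (∑ j ∈ Finset.range (w D'),
            W D' (i : ℕ) j
              * hiddenLayers W b w D' (fun j => if h : j < d then x ⟨j, h⟩ else 0) j)
          + b D' (i : ℕ)

/-- `κ : [0,1]^d → ℝ^K` belongs to the Hölder class `C_{τ,d,K,B}` with `τ = r + ν`:
each coordinate `κ_i` is `r` times continuously differentiable on `[0,1]^d`, all its
partial derivatives `∂^α κ_i` of order `|α| ≤ r` are bounded by `B`, and the order-`r`
partial derivatives are `ν`-Hölder with constant `B`. -/
def MemHolderClass (r : ℕ) (ν : ℝ) (d K : ℕ) (B : ℝ)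
    (κ : (Fin d → ℝ) → Fin K → ℝ) : Prop :=
  ∀ i : Fin K,
    ContDiffOn ℝ r (fun x => κ x i) (Set.Icc (0 : Fin d → ℝ) 1) ∧
    (∀ m : ℕ, m ≤ r → ∀ x ∈ Set.Icc (0 : Fin d → ℝ) 1, ∀ α : Fin m → Fin d,
      |iteratedFDerivWithin ℝ m (fun x => κ x i) (Set.Icc (0 : Fin d → ℝ) 1) x
          (fun j => Pi.single (α j) 1)| ≤ B) ∧
    (∀ x ∈ Set.Icc (0 : Fin d → ℝ) 1, ∀ y ∈ Set.Icc (0 : Fin d → ℝ) 1, x ≠ y →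
      ∀ α : Fin r → Fin d,
      |iteratedFDerivWithin ℝ r (fun x => κ x i) (Set.Icc (0 : Fin d → ℝ) 1) x
            (fun j => Pi.single (α j) 1)
        - iteratedFDerivWithin ℝ r (fun x => κ x i) (Set.Icc (0 : Fin d → ℝ) 1) y
            (fun j => Pi.single (α j) 1)|
        ≤ B * ‖x - y‖ ^ ν)

/-!
Cut the cube by the grid of mesh `1 / N` and glue the Taylor polynomials at the grid nodes with the
nodal functions of the Freudenthal–Kuhn triangulation. These are exactly representable by ReLU
networks, and they sum exactly to one: the value at `x` of the nodal function of `p` is the length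
of the set of diagonal shifts `s ∈ [0, 1)` for which every `N x_j + s` has integer part `p_j`.
Monomials are multiplied out with approximate squares built from `k` iterates of the tent map, at
the price `4 ^ (-k)` in accuracy.

Since ReLU is positively homogeneous, all hidden layers can be normalized, and only the `ℓ¹` norm
of the readout counts. Each factor of a monomial costs a factor `k` in this norm, but the Taylor
coefficient of an order `m` monomial in the variable `N x - p` carries `N ^ (-m)`, and `k / N` is
bounded for the choice `N ≈ 2 ^ (2 k / τ)` dictated by the accuracy. So the norm is of the order of
the number `N ^ d` of nodes times the slope `N` of the nodal functions.
-/

open MeasureTheory Set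

section AffineCombinations

variable {X : Type*}

/-- `g` is an affine combination of the functions in `S` whose coefficients, the constant
included, have `ℓ¹` norm at most `P`: `g` is a row, of norm at most `P`, of an affine layer fed
with `S`. -/
def IsAffineComb (P : ℝ) (S : Finset (X → ℝ)) (g : X → ℝ) : Prop :=
  ∃ (a : (X → ℝ) → ℝ) (b : ℝ), (∀ x, g x = (∑ f ∈ S, a f * f x) + b) ∧ (∑ f ∈ S, |a f|) + |b| ≤ P

namespace IsAffineComb

variable {P Q : ℝ} {S T : Finset (X → ℝ)} {f g : X → ℝ}

lemma nonneg (h : IsAffineComb P S f) : 0 ≤ P := by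
  obtain ⟨a, b, -, h⟩ := h
  exact le_trans (by positivity) h

lemma mono (h : IsAffineComb P S f) (hPQ : P ≤ Q) : IsAffineComb Q S f := by
  obtain ⟨a, b, hf, hab⟩ := h
  exact ⟨a, b, hf, hab.trans hPQ⟩

lemma subset (h : IsAffineComb P S f) (hST : S ⊆ T) : IsAffineComb P T f := by
  classical
  obtain ⟨a, b, hf, hab⟩ := h
  have hinter : T ∩ S = S := Finset.inter_eq_right.2 hST
  refine ⟨fun u => if u ∈ S then a u else 0, b, fun x => ?_, ?_⟩
  · simpa [ite_mul, Finset.sum_ite_mem, hinter] using hf x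
  · simpa [apply_ite abs, Finset.sum_ite_mem, hinter] using hab

lemma of_mem (h : f ∈ S) : IsAffineComb 1 S f := by
  classical
  refine ⟨fun u => if u = f then 1 else 0, 0, fun x => ?_, ?_⟩
  · simp [h]
  · simp [apply_ite abs, h]

lemma const (c : ℝ) : IsAffineComb |c| S (fun _ => c) :=
  ⟨fun _ => 0, c, fun x => by simp, by simp⟩

lemma add (hf : IsAffineComb P S f) (hg : IsAffineComb Q S g) :
    IsAffineComb (P + Q) S (fun x => f x + g x) := by
  obtain ⟨a, b, hf, hab⟩ := hf
  obtain ⟨a', b', hg, hab'⟩ := hg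
  refine ⟨fun u => a u + a' u, b + b', fun x => ?_, ?_⟩
  · simp only [hf x, hg x, add_mul, Finset.sum_add_distrib]
    ring
  · have := Finset.sum_le_sum (s := S) fun u _ => abs_add_le (a u) (a' u)
    rw [Finset.sum_add_distrib] at this
    linarith [abs_add_le b b']

lemma smul (c : ℝ) (h : IsAffineComb P S f) : IsAffineComb (|c| * P) S (fun x => c * f x) := by
  obtain ⟨a, b, hf, hab⟩ := h
  refine ⟨fun u => c * a u, c * b, fun x => ?_, ?_⟩
  · simp only [hf x, mul_add, Finset.mul_sum, mul_assoc]
  · simp only [abs_mul, ← Finset.mul_sum, ← mul_add]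
    exact mul_le_mul_of_nonneg_left hab (abs_nonneg c)

lemma sum {κ : Type*} (I : Finset κ) {p : κ → ℝ} {F : κ → X → ℝ}
    (h : ∀ i ∈ I, IsAffineComb (p i) S (F i)) :
    IsAffineComb (∑ i ∈ I, p i) S (fun x => ∑ i ∈ I, F i x) := by
  classical
  induction I using Finset.induction_on with
  | empty => simpa using const (S := S) (0 : ℝ)
  | insert i I hi ih =>
    simp only [Finset.sum_insert hi]
    exact (h i (by simp)).add (ih fun j hj => h j (by simp [hj]))

lemma eq_zero (h : IsAffineComb 0 S f) : f = 0 := by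
  obtain ⟨a, b, hf, hab⟩ := h
  have hsum : 0 ≤ ∑ u ∈ S, |a u| := by positivity
  have hb : b = 0 := abs_eq_zero.1 (by linarith [abs_nonneg b])
  have ha : ∀ u ∈ S, |a u| = 0 :=
    (Finset.sum_eq_zero_iff_of_nonneg fun _ _ => abs_nonneg _).1
      (by linarith [abs_nonneg b])
  funext x
  rw [hf, hb, Finset.sum_eq_zero fun u hu => by rw [abs_eq_zero.1 (ha u hu), zero_mul]]
  simp

end IsAffineComb

end AffineCombinations

section HiddenLayers

variable {ι : Type*} {L n m : ℕ} {P Q : ℝ}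

/-- The functions in `S` are units of the `L`-th hidden layer of a ReLU network on `ι → ℝ` whose
hidden layers have width at most `n` and rows of `ℓ¹` norm at most one. Layer `0` is the input, so
its units are coordinates. -/
def IsHiddenLayer : ℕ → ℕ → Finset ((ι → ℝ) → ℝ) → Prop
  | 0, _, S => ∀ f ∈ S, ∃ j : ι, f = fun x => x j
  | L + 1, n, S => ∃ T : Finset ((ι → ℝ) → ℝ), IsHiddenLayer L n T ∧ S.card ≤ n ∧
      ∀ g ∈ S, ∃ h, IsAffineComb 1 T h ∧ g = fun x => max 0 (h x)

namespace IsHiddenLayer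

variable {S T : Finset ((ι → ℝ) → ℝ)}

lemma mono (h : IsHiddenLayer L n S) (hnm : n ≤ m) : IsHiddenLayer L m S := by
  induction L generalizing S with
  | zero => exact h
  | succ L ih =>
    obtain ⟨T, hT, hcard, hS⟩ := h
    exact ⟨T, ih hT, hcard.trans hnm, hS⟩

lemma empty (L n : ℕ) : IsHiddenLayer L n (∅ : Finset ((ι → ℝ) → ℝ)) := by
  induction L with
  | zero => simp [IsHiddenLayer]
  | succ L ih => exact ⟨∅, ih, by simp, by simp⟩

open Classical in
lemma union (hS : IsHiddenLayer L n S) (hT : IsHiddenLayer L m T) :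
    IsHiddenLayer L (n + m) (S ∪ T) := by
  induction L generalizing S T with
  | zero => exact fun f hf => (Finset.mem_union.1 hf).elim (hS f) (hT f)
  | succ L ih =>
    obtain ⟨S', hS', hcard, hS⟩ := hS
    obtain ⟨T', hT', hcard', hT⟩ := hT
    refine ⟨S' ∪ T', ih hS' hT', (Finset.card_union_le _ _).trans (by lia), fun g hg => ?_⟩
    rcases Finset.mem_union.1 hg with hg | hg
    · obtain ⟨u, hu, rfl⟩ := hS g hg
      exact ⟨u, hu.subset Finset.subset_union_left, rfl⟩
    · obtain ⟨u, hu, rfl⟩ := hT g hg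
      exact ⟨u, hu.subset Finset.subset_union_right, rfl⟩

open Classical in
lemma biUnion {κ : Type*} (I : Finset κ) {S : κ → Finset ((ι → ℝ) → ℝ)}
    (h : ∀ i ∈ I, IsHiddenLayer L n (S i)) : IsHiddenLayer L (I.card * n) (I.biUnion S) := by
  induction I using Finset.induction_on with
  | empty => simpa using empty L 0
  | insert i I hi ih =>
    rw [Finset.biUnion_insert, Finset.card_insert_of_notMem hi]
    have := (h i (by simp)).union (ih fun j hj => h j (by simp [hj]))
    exact this.mono (by lia)

/-- Because ReLU is positively homogeneous, a row of norm `P` can be rescaled to norm one and the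
factor `P` moved to the next layer; this is how norms are pushed to the output. -/
lemma exists_relu {κ : Type*} [Fintype κ] {S : Finset ((ι → ℝ) → ℝ)} {P : κ → ℝ}
    {g : κ → (ι → ℝ) → ℝ} (hS : IsHiddenLayer L n S) (hg : ∀ i, IsAffineComb (P i) S (g i))
    (hn : Fintype.card κ ≤ n) :
    ∃ T, IsHiddenLayer (L + 1) n T ∧ ∀ i, IsAffineComb (P i) T (fun x => max 0 (g i x)) := by
  classical
  let unit (i : κ) (x : ι → ℝ) : ℝ := max 0 ((P i)⁻¹ * g i x)
  refine ⟨Finset.univ.image unit, ⟨S, hS, Finset.card_image_le.trans hn, ?_⟩, fun i => ?_⟩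
  · intro u hu
    obtain ⟨i, -, rfl⟩ := Finset.mem_image.1 hu
    refine ⟨_, ((hg i).smul (P i)⁻¹).mono ?_, rfl⟩
    rw [abs_of_nonneg (inv_nonneg.2 (hg i).nonneg)]
    exact inv_mul_le_one
  · rcases (hg i).nonneg.eq_or_lt with hP | hP
    · have hzero : g i = 0 := (hP ▸ hg i).eq_zero
      simpa [hzero, ← hP] using IsAffineComb.const (S := Finset.univ.image unit) 0
    · have hunit := (IsAffineComb.of_mem (Finset.mem_image_of_mem unit (Finset.mem_univ i))).smul
        (P i)
      rw [abs_of_pos hP, mul_one] at hunit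
      convert hunit using 2 with x
      simp only [unit]
      rw [mul_max_of_nonneg _ _ hP.le, mul_zero, mul_inv_cancel_left₀ hP.ne']

lemma succ (h : IsHiddenLayer (L + 1) n S) : IsHiddenLayer (L + 2) n S := by
  obtain ⟨T, -, hcard, hS⟩ := id h
  refine ⟨S, h, hcard, fun g hg => ⟨g, .of_mem hg, ?_⟩⟩
  obtain ⟨u, -, rfl⟩ := hS g hg
  simp

end IsHiddenLayer

/-- `f : (ι → ℝ) → ℝ` is an affine readout, with coefficients of `ℓ¹` norm at most `P`, of the
`L`-th hidden layer of a normalized ReLU network of width at most `n`. -/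
def IsReluRealizable (L n : ℕ) (P : ℝ) (f : (ι → ℝ) → ℝ) : Prop :=
  ∃ S : Finset ((ι → ℝ) → ℝ), IsHiddenLayer L n S ∧ IsAffineComb P S f

namespace IsReluRealizable

variable {f g : (ι → ℝ) → ℝ}

lemma nonneg (h : IsReluRealizable L n P f) : 0 ≤ P := by
  obtain ⟨S, -, h⟩ := h
  exact h.nonneg

lemma mono (h : IsReluRealizable L n P f) (hn : n ≤ m) (hP : P ≤ Q) :
    IsReluRealizable L m Q f := by
  obtain ⟨S, hS, hf⟩ := h
  exact ⟨S, hS.mono hn, hf.mono hP⟩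

lemma const (L n : ℕ) (c : ℝ) : IsReluRealizable L n |c| (fun _ : ι → ℝ => c) :=
  ⟨∅, .empty L n, .const c⟩

lemma coord (j : ι) : IsReluRealizable 0 0 1 (fun x : ι → ℝ => x j) :=
  ⟨{fun x => x j}, by simpa [IsHiddenLayer] using ⟨j, rfl⟩, .of_mem (by simp)⟩

lemma add (hf : IsReluRealizable L n P f) (hg : IsReluRealizable L m Q g) :
    IsReluRealizable L (n + m) (P + Q) (fun x => f x + g x) := by
  classical
  obtain ⟨S, hS, hf⟩ := hf
  obtain ⟨T, hT, hg⟩ := hg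
  exact ⟨S ∪ T, hS.union hT,
    (hf.subset Finset.subset_union_left).add (hg.subset Finset.subset_union_right)⟩

lemma smul (c : ℝ) (h : IsReluRealizable L n P f) :
    IsReluRealizable L n (|c| * P) (fun x => c * f x) := by
  obtain ⟨S, hS, hf⟩ := h
  exact ⟨S, hS, hf.smul c⟩

lemma neg (h : IsReluRealizable L n P f) : IsReluRealizable L n P (fun x => -f x) := by
  simpa using h.smul (-1)

lemma sub (hf : IsReluRealizable L n P f) (hg : IsReluRealizable L m Q g) :
    IsReluRealizable L (n + m) (P + Q) (fun x => f x - g x) := by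
  simpa [sub_eq_add_neg] using hf.add hg.neg

lemma relu (h : IsReluRealizable L n P f) :
    IsReluRealizable (L + 1) (n + 1) P (fun x => max 0 (f x)) := by
  obtain ⟨S, hS, hf⟩ := h
  obtain ⟨T, hT, hrelu⟩ := (hS.mono n.le_succ).exists_relu (κ := Unit) (fun _ => hf) (by simp)
  exact ⟨T, hT, hrelu ()⟩

lemma mono_depth {L' : ℕ} (h : IsReluRealizable L n P f) (hL : 1 ≤ L) (hLL' : L ≤ L') :
    IsReluRealizable L' n P f := by
  induction L', hLL' using Nat.le_induction with
  | base => exact h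
  | succ L' hLL' ih =>
    obtain ⟨S, hS, hf⟩ := ih
    obtain ⟨l, rfl⟩ := Nat.exists_eq_add_of_le' (hL.trans hLL')
    exact ⟨S, hS.succ, hf⟩

/-- An affine function is carried through the layers by the ReLUs of its positive and negative
parts. -/
lemma of_depth_zero (h : IsReluRealizable 0 0 P f) (L : ℕ) : IsReluRealizable L 2 (2 * P) f := by
  rcases Nat.eq_zero_or_pos L with rfl | hL
  · exact h.mono (by simp) (by linarith [h.nonneg])
  · have hparts := h.relu.sub h.neg.relu
    simp only [max_zero_sub_max_neg_zero_eq_self, max_comm (0 : ℝ)] at hparts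
    exact (hparts.mono le_rfl (two_mul P).ge).mono_depth le_rfl hL

open Classical in
lemma fold_max {κ : Type*} {t : κ → (ι → ℝ) → ℝ} (s : Finset κ) (hP : 0 ≤ P)
    (ht : ∀ i ∈ s, ∀ L, IsReluRealizable L n P (t i)) :
    IsReluRealizable s.card (3 ^ s.card * (n + 2)) (3 ^ s.card * P)
      (fun x => s.fold max 0 (fun i => t i x)) := by
  induction s using Finset.induction_on with
  | empty => exact (const 0 _ 0).mono le_rfl (by simpa using hP)
  | insert i s hi ih =>
    have hs := ih fun j hj => ht j (by simp [hj])
    have hmax := hs.relu.add (((ht i (by simp) s.card).sub hs).relu)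
    rw [Finset.card_insert_of_notMem hi]
    convert hmax.mono (m := 3 ^ (s.card + 1) * (n + 2)) (Q := 3 ^ (s.card + 1) * P) ?_ ?_
      using 2 with x
    · have hfold : 0 ≤ s.fold max 0 (fun j => t j x) := Finset.le_fold_max 0 |>.2 (.inl le_rfl)
      rw [Finset.fold_insert hi, max_eq_right hfold, ← max_add_add_left, add_zero,
        add_sub_cancel, max_comm]
    · have : 1 ≤ 3 ^ s.card := Nat.one_le_pow _ _ (by lia)
      rw [pow_succ]
      nlinarith
    · have : (1 : ℝ) ≤ 3 ^ s.card := one_le_pow₀ (by norm_num)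
      rw [pow_succ]
      nlinarith

end IsReluRealizable

end HiddenLayers

section ApproximateProduct

/-- The tent map of `[-1, 1]` onto itself. -/
def tent (x : ℝ) : ℝ := 1 - 2 * |x|

/-- Approximate square. It equals `x ^ 2` up to `(1 / 4) ^ k` times the square of the `k`-th tent
iterate, and iterating the tent map costs one ReLU layer per step. -/
def sqApprox (k : ℕ) (x : ℝ) : ℝ :=
  ∑ s ∈ Finset.range k, (1 / 4 : ℝ) ^ s * |tent^[s] x| - (1 - (1 / 4) ^ k) / 3

/-- Approximate product, by polarization of `sqApprox`. -/
def mulApprox (k : ℕ) (a b : ℝ) : ℝ := sqApprox k ((a + b) / 2) - sqApprox k ((a - b) / 2)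

/-- Approximate product of `a` and all `b j`, with the factors multiplied in one at a time. -/
def prodApprox (k : ℕ) (a : ℝ) : (m : ℕ) → (Fin m → ℝ) → ℝ
  | 0, _ => a
  | m + 1, b => mulApprox k (prodApprox k a m (Fin.tail b)) (b 0)

variable {k m : ℕ} {a x : ℝ}

lemma abs_tent_iterate_le_one (hx : |x| ≤ 1) (s : ℕ) : |tent^[s] x| ≤ 1 := by
  induction s with
  | zero => exact hx
  | succ s ih =>
    have := abs_nonneg (tent^[s] x)
    rw [Function.iterate_succ_apply', tent, abs_le]
    constructor <;> linarith

lemma abs_tent_iterate_neg (s : ℕ) (x : ℝ) : |tent^[s] (-x)| = |tent^[s] x| := by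
  cases s <;> simp [tent]

lemma sqApprox_neg (k : ℕ) (x : ℝ) : sqApprox k (-x) = sqApprox k x := by
  simp only [sqApprox, abs_tent_iterate_neg]

lemma sqApprox_succ (k : ℕ) (x : ℝ) :
    sqApprox (k + 1) x = sqApprox k x + (1 / 4) ^ k * (|tent^[k] x| - 1 / 4) := by
  simp only [sqApprox, Finset.sum_range_succ, pow_succ]
  ring

lemma sq_sub_sqApprox (k : ℕ) (x : ℝ) :
    x ^ 2 - sqApprox k x = (1 / 4) ^ k * (tent^[k] x) ^ 2 := by
  induction k with
  | zero => simp [sqApprox]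
  | succ k ih =>
    rw [← sq_abs (tent^[k] x)] at ih
    rw [sqApprox_succ, Function.iterate_succ_apply', tent, pow_succ]
    linear_combination ih

lemma sqApprox_le_sq (k : ℕ) (x : ℝ) : sqApprox k x ≤ x ^ 2 := by
  rw [← sub_nonneg, sq_sub_sqApprox]
  positivity

lemma sq_le_sqApprox_add (hx : |x| ≤ 1) (k : ℕ) : x ^ 2 ≤ sqApprox k x + (1 / 4) ^ k := by
  have htent : (tent^[k] x) ^ 2 ≤ 1 := (sq_le_one_iff_abs_le_one _).2 (abs_tent_iterate_le_one hx k)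
  have := mul_le_of_le_one_right (by positivity : (0 : ℝ) ≤ (1 / 4) ^ k) htent
  linarith [sq_sub_sqApprox k x]

lemma sqApprox_le (hx : |x| ≤ 1) (k : ℕ) : sqApprox k x ≤ 1 - (1 / 4) ^ k := by
  induction k with
  | zero => simp [sqApprox]
  | succ k ih =>
    have := mul_le_mul_of_nonneg_left (abs_tent_iterate_le_one hx k)
      (by positivity : (0 : ℝ) ≤ (1 / 4) ^ k)
    rw [sqApprox_succ, pow_succ]
    linarith

lemma mulApprox_zero_left (k : ℕ) (b : ℝ) : mulApprox k 0 b = 0 := by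
  rw [mulApprox, zero_add, zero_sub, neg_div, sqApprox_neg, sub_self]

lemma abs_half_add_le_one {b : ℝ} (ha : |a| ≤ 1) (hb : |b| ≤ 1) : |(a + b) / 2| ≤ 1 := by
  rw [abs_div, abs_two]
  linarith [abs_add_le a b]

lemma abs_half_sub_le_one {b : ℝ} (ha : |a| ≤ 1) (hb : |b| ≤ 1) : |(a - b) / 2| ≤ 1 := by
  simpa [sub_eq_add_neg] using abs_half_add_le_one ha (b := -b) (by simpa using hb)

lemma abs_mulApprox_sub_le {b : ℝ} (ha : |a| ≤ 1) (hb : |b| ≤ 1) (k : ℕ) :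
    |mulApprox k a b - a * b| ≤ (1 / 4) ^ k := by
  have hpolar : a * b = ((a + b) / 2) ^ 2 - ((a - b) / 2) ^ 2 := by ring
  rw [mulApprox, hpolar, abs_le]
  constructor <;>
    linarith [sqApprox_le_sq k ((a + b) / 2), sqApprox_le_sq k ((a - b) / 2),
      sq_le_sqApprox_add (abs_half_add_le_one ha hb) k,
      sq_le_sqApprox_add (abs_half_sub_le_one ha hb) k]

lemma abs_mulApprox_le_one {b : ℝ} (ha : |a| ≤ 1) (hb : |b| ≤ 1) (k : ℕ) :
    |mulApprox k a b| ≤ 1 := by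
  have hadd := abs_half_add_le_one ha hb
  have hsub := abs_half_sub_le_one ha hb
  rw [mulApprox, abs_le]
  constructor <;>
    linarith [sq_le_sqApprox_add hadd k, sq_le_sqApprox_add hsub k, sqApprox_le hadd k,
      sqApprox_le hsub k, sq_nonneg ((a + b) / 2), sq_nonneg ((a - b) / 2)]

lemma prodApprox_zero_left (k : ℕ) (b : Fin m → ℝ) : prodApprox k 0 m b = 0 := by
  induction m with
  | zero => rfl
  | succ m ih => rw [prodApprox, ih, mulApprox_zero_left]

lemma abs_prodApprox_le_one {b : Fin m → ℝ} (ha : |a| ≤ 1) (hb : ∀ j, |b j| ≤ 1) (k : ℕ) :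
    |prodApprox k a m b| ≤ 1 := by
  induction m with
  | zero => exact ha
  | succ m ih => exact abs_mulApprox_le_one (ih fun j => hb j.succ) (hb 0) k

lemma abs_prodApprox_sub_le {b : Fin m → ℝ} (ha : |a| ≤ 1) (hb : ∀ j, |b j| ≤ 1) (k : ℕ) :
    |prodApprox k a m b - a * ∏ j, b j| ≤ m * (1 / 4) ^ k := by
  induction m with
  | zero => simp [prodApprox]
  | succ m ih =>
    set p := prodApprox k a m (Fin.tail b)
    have htail : |p - a * ∏ j : Fin m, b j.succ| ≤ m * (1 / 4) ^ k := ih fun j => hb j.succ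
    have hp : |p| ≤ 1 := abs_prodApprox_le_one ha (fun j => hb j.succ) k
    calc |prodApprox k a (m + 1) b - a * ∏ j, b j|
        = |(mulApprox k p (b 0) - p * b 0) + (p - a * ∏ j : Fin m, b j.succ) * b 0| := by
          rw [prodApprox, Fin.prod_univ_succ]
          congr 1
          ring
      _ ≤ |mulApprox k p (b 0) - p * b 0| + |p - a * ∏ j : Fin m, b j.succ| * |b 0| := by
          rw [← abs_mul]
          exact abs_add_le _ _
      _ ≤ (1 / 4) ^ k + m * (1 / 4) ^ k :=
          add_le_add (abs_mulApprox_sub_le hp (hb 0) k)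
            ((mul_le_of_le_one_right (abs_nonneg _) (hb 0)).trans htail)
      _ = (m + 1 : ℕ) * (1 / 4) ^ k := by
          push_cast
          ring

end ApproximateProduct

section ApproximateProductNetworks

variable {ι : Type*} {L n m k : ℕ} {P Q : ℝ} {f g : (ι → ℝ) → ℝ}

lemma abs_eq_max_zero_add_max_zero_neg (x : ℝ) : |x| = max 0 x + max 0 (-x) := by
  rw [max_comm 0, max_comm 0, max_zero_add_max_neg_zero_eq_abs_self]

namespace IsReluRealizable

/-- The partial sum of the approximate square is nonnegative, so a single ReLU unit carries it along
next to the two units that hold the current tent iterate. -/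
lemma exists_tent_iterate (h : IsReluRealizable L n P f) (s : ℕ) :
    ∃ S, IsHiddenLayer (L + s) (n + 3) S ∧
      IsAffineComb (4 ^ s * (P + 1) - 1) S (fun x => tent^[s] (f x)) ∧
      IsAffineComb (2 * s * (P + 1)) S
        (fun x => ∑ t ∈ Finset.range s, (1 / 4 : ℝ) ^ t * |tent^[t] (f x)|) := by
  induction s with
  | zero =>
    obtain ⟨S, hS, hf⟩ := h
    exact ⟨S, hS.mono (by lia), by simpa using hf, by simpa using IsAffineComb.const 0⟩
  | succ s ih =>
    obtain ⟨S, hS, htent, hsum⟩ := ih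
    set v : (ι → ℝ) → ℝ := fun x => tent^[s] (f x)
    set A : (ι → ℝ) → ℝ := fun x => ∑ t ∈ Finset.range s, (1 / 4 : ℝ) ^ t * |tent^[t] (f x)|
    set V := 4 ^ s * (P + 1) - 1
    have hneg : IsAffineComb V S (fun x => -v x) := by simpa using htent.smul (-1)
    obtain ⟨T, hT, hrelu⟩ := hS.exists_relu (P := ![V, V, 2 * s * (P + 1)])
      (g := ![v, fun x => -v x, A]) (by intro i; fin_cases i <;> assumption) (by simp)
    have habs : IsAffineComb (2 * V) T (fun x => |v x|) := by
      have hadd : IsAffineComb (V + V) T (fun x => max 0 (v x) + max 0 (-v x)) :=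
        (hrelu 0).add (hrelu 1)
      simpa only [abs_eq_max_zero_add_max_zero_neg, two_mul] using hadd
    have hA : IsAffineComb (2 * s * (P + 1)) T A := by
      have hnonneg (x) : 0 ≤ A x := Finset.sum_nonneg fun t _ => by positivity
      have hmax : IsAffineComb (2 * s * (P + 1)) T (fun x => max 0 (A x)) := hrelu 2
      simpa only [max_eq_right (hnonneg _)] using hmax
    refine ⟨T, hT, ?_, ?_⟩
    · convert ((IsAffineComb.const 1).add (habs.smul (-2))).mono (Q := 4 ^ (s + 1) * (P + 1) - 1) ?_
        using 2 with x
      · rw [Function.iterate_succ_apply', tent]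
        ring
      · simp only [V, abs_neg, abs_one, abs_two, pow_succ]
        linarith
    · convert (hA.add (habs.smul ((1 / 4) ^ s))).mono (Q := 2 * (s + 1 : ℕ) * (P + 1)) ?_
        using 2 with x
      · exact Finset.sum_range_succ _ s
      · have hpow : (1 / 4 : ℝ) ^ s * 4 ^ s = 1 := by rw [← mul_pow]; norm_num
        have hpos : (0 : ℝ) < (1 / 4) ^ s := by positivity
        rw [abs_of_pos hpos]
        push_cast
        linear_combination 2 * (P + 1) * hpow + 2 * hpos

lemma sqApprox (h : IsReluRealizable L n P f) (k : ℕ) :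
    IsReluRealizable (L + k) (n + 3) (2 * k * (P + 1) + 1) (fun x => sqApprox k (f x)) := by
  obtain ⟨S, hS, -, hsum⟩ := h.exists_tent_iterate k
  refine ⟨S, hS, ?_⟩
  have hpow : (1 / 4 : ℝ) ^ k ≤ 1 := pow_le_one₀ (by norm_num) (by norm_num)
  have hpos : (0 : ℝ) < (1 / 4) ^ k := by positivity
  refine (hsum.add (.const (-((1 - (1 / 4) ^ k) / 3)))).mono ?_
  rw [abs_neg, abs_of_nonneg (by linarith)]
  linarith

lemma mulApprox (hf : IsReluRealizable L n P f) (hg : IsReluRealizable L m Q g) (k : ℕ) :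
    IsReluRealizable (L + k) (2 * (n + m + 3)) (2 * k * (P + Q + 2) + 2)
      (fun x => mulApprox k (f x) (g x)) := by
  convert ((((hf.add hg).smul (1 / 2)).sqApprox k).sub
    (((hf.sub hg).smul (1 / 2)).sqApprox k)).mono (m := 2 * (n + m + 3)) ?_ ?_ using 2 with x
  · simp only [_root_.mulApprox]
    ring_nf
  · lia
  · rw [abs_of_pos (by norm_num)]
    linarith

lemma prodApprox {q : ℕ} {b : Fin m → (ι → ℝ) → ℝ} (hf : IsReluRealizable L n P f) (hQ : 0 ≤ Q)
    (hb : ∀ j l, IsReluRealizable l q Q (b j)) (hk : 1 ≤ k) :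
    IsReluRealizable (L + m * k) (4 ^ m * (n + q + 3)) ((6 * k) ^ m * (P + Q + 2))
      (fun x => prodApprox k (f x) m (fun j => b j x)) := by
  induction m with
  | zero =>
    rw [zero_mul, pow_zero, pow_zero, one_mul, one_mul]
    exact hf.mono (by lia) (by linarith)
  | succ m ih =>
    have hprod := (ih (b := Fin.tail b) fun j => hb j.succ).mulApprox (hb 0 _) k
    convert hprod.mono (m := 4 ^ (m + 1) * (n + q + 3)) (Q := (6 * k) ^ (m + 1) * (P + Q + 2))
      ?_ ?_ using 1
    · ring
    · rfl
    · have : 1 ≤ 4 ^ m := Nat.one_le_pow _ _ (by lia)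
      rw [pow_succ]
      nlinarith
    · have hk' : (1 : ℝ) ≤ k := by exact_mod_cast hk
      have hP := hf.nonneg
      have hpow : (1 : ℝ) ≤ (6 * k) ^ m := one_le_pow₀ (by linarith)
      have hR : Q + 2 ≤ (6 * k) ^ m * (P + Q + 2) := by nlinarith
      rw [pow_succ]
      nlinarith

end IsReluRealizable

end ApproximateProductNetworks

section KuhnHat

variable {ι : Type*} [Fintype ι]

/-- Nodal function at the origin of the Freudenthal–Kuhn triangulation of `ι → ℝ` with vertices
the integer points; the nodal function at `p` is its translate by `p`. It equals
`1 - max (0, t) - max (0, -t)`, truncated below at zero. -/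
def kuhnHat (t : ι → ℝ) : ℝ :=
  max 0 (1 - (Finset.univ.fold max 0 t + Finset.univ.fold max 0 (-t)))

lemma kuhnHat_nonneg (t : ι → ℝ) : 0 ≤ kuhnHat t := le_max_left _ _

lemma fold_max_zero_nonneg (t : ι → ℝ) : 0 ≤ Finset.univ.fold max 0 t :=
  (Finset.le_fold_max 0).2 (.inl le_rfl)

lemma le_fold_max_zero (t : ι → ℝ) (j : ι) : t j ≤ Finset.univ.fold max 0 t :=
  (Finset.le_fold_max _).2 (.inr ⟨j, Finset.mem_univ j, le_rfl⟩)

lemma kuhnHat_le_one (t : ι → ℝ) : kuhnHat t ≤ 1 :=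
  max_le zero_le_one (by linarith [fold_max_zero_nonneg t, fold_max_zero_nonneg (-t)])

lemma abs_lt_one_of_kuhnHat_ne_zero {t : ι → ℝ} (h : kuhnHat t ≠ 0) (j : ι) : |t j| < 1 := by
  have hpos : 0 < 1 - (Finset.univ.fold max 0 t + Finset.univ.fold max 0 (-t)) := by
    by_contra hle
    exact h (max_eq_left (not_lt.1 hle))
  have hneg : -t j ≤ Finset.univ.fold max 0 (-t) := le_fold_max_zero (-t) j
  rw [abs_lt]
  constructor <;>
    linarith [le_fold_max_zero t j, fold_max_zero_nonneg t, fold_max_zero_nonneg (-t)]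

lemma mem_Ico_fold_max_iff (t : ι → ℝ) (s : ℝ) :
    s ∈ Ico (Finset.univ.fold max 0 (-t)) (1 - Finset.univ.fold max 0 t) ↔
      s ∈ Ico 0 1 ∧ ∀ j, t j + s ∈ Ico 0 1 := by
  rw [mem_Ico, lt_sub_comm, Finset.fold_max_le, Finset.fold_max_lt]
  simp only [Finset.mem_univ, true_implies, Pi.neg_apply, mem_Ico, neg_le_iff_add_nonneg',
    lt_sub_iff_add_lt, zero_add, forall_and]
  tauto

/-- The diagonal shifts `s ∈ [0, 1)` that move `t` into the unit cell form an interval, whose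
length is the value of the hat. -/
lemma kuhnHat_eq_volume (t : ι → ℝ) :
    kuhnHat t = volume.real {s : ℝ | s ∈ Ico 0 1 ∧ ∀ j, t j + s ∈ Ico 0 1} := by
  simp only [← mem_Ico_fold_max_iff, ofPred_mem_eq, Real.volume_real_Ico, kuhnHat, max_comm (0 : ℝ)]
  congr 1
  ring

/-- Each diagonal shift of `y` lies in exactly one cell of the integer grid. -/
theorem sum_kuhnHat_sub_eq_one [DecidableEq ι] {N : ℕ} {y : ι → ℝ}
    (hy₀ : ∀ j, 0 ≤ y j) (hyN : ∀ j, y j ≤ N) :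
    ∑ p : ι → Fin (N + 1), kuhnHat (fun j => y j - p j) = 1 := by
  let cell (p : ι → Fin (N + 1)) : Set ℝ := {s | s ∈ Ico 0 1 ∧ ∀ j, y j - p j + s ∈ Ico 0 1}
  have mem_cell (p) (s : ℝ) : s ∈ cell p ↔ s ∈ Ico 0 1 ∧ ∀ j, ⌊y j + s⌋₊ = p j := by
    refine and_congr_right fun hs => forall_congr' fun j => ?_
    rw [Nat.floor_eq_iff (add_nonneg (hy₀ j) hs.1), mem_Ico]
    constructor <;> rintro ⟨h₁, h₂⟩ <;> constructor <;> linarith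
  have hunion : ⋃ p, cell p = Ico (0 : ℝ) 1 := by
    refine subset_antisymm (iUnion_subset fun p s hs => hs.1) fun s hs => mem_iUnion.2 ?_
    have hlt (j) : ⌊y j + s⌋₊ < N + 1 := by
      rw [Nat.floor_lt (add_nonneg (hy₀ j) hs.1)]
      push_cast
      linarith [hyN j, hs.2]
    exact ⟨fun j => ⟨⌊y j + s⌋₊, hlt j⟩, (mem_cell _ s).2 ⟨hs, fun j => rfl⟩⟩
  have hdisj : Pairwise (Function.onFun Disjoint cell) := fun p q hpq => by
    refine disjoint_left.2 fun s hp hq => hpq (funext fun j => Fin.ext ?_)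
    rw [← ((mem_cell p s).1 hp).2 j, ((mem_cell q s).1 hq).2 j]
  have hmeas (p) : MeasurableSet (cell p) := by
    simp only [cell, ← mem_Ico_fold_max_iff, ofPred_mem_eq, measurableSet_Ico]
  have hfin (p) : volume (cell p) ≠ ⊤ := measure_ne_top_of_subset (fun s hs => hs.1) (by simp)
  simp only [kuhnHat_eq_volume]
  rw [← measureReal_iUnion_fintype hdisj hmeas hfin, hunion]
  simp

lemma card_abs_sub_natCast_lt_one_le_two (N : ℕ) (y : ℝ) :
    (Finset.univ.filter fun q : Fin (N + 1) => |y - q| < 1).card ≤ 2 := by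
  refine (Finset.card_le_card_of_injOn (t := {⌊y⌋, ⌊y⌋ + 1})
    (fun q : Fin (N + 1) => ((q : ℕ) : ℤ))
    (fun q hq => ?_) fun p _ q _ hpq => Fin.ext (by simpa using hpq)).trans Finset.card_le_two
  obtain ⟨hlo, hhi⟩ := abs_lt.1 (Finset.mem_filter.1 hq).2
  have hle : ⌊y⌋ ≤ ((q : ℕ) : ℤ) := by
    rw [← Int.lt_add_one_iff, Int.floor_lt]
    push_cast
    linarith
  have hge : ((q : ℕ) : ℤ) - 1 ≤ ⌊y⌋ := by
    rw [Int.le_floor]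
    push_cast
    linarith
  simp only [Finset.coe_insert, Finset.coe_singleton, mem_insert_iff, mem_singleton_iff]
  lia

lemma card_kuhnHat_sub_ne_zero_le [DecidableEq ι] (N : ℕ) (y : ι → ℝ) :
    (Finset.univ.filter fun p : ι → Fin (N + 1) => kuhnHat (fun j => y j - p j) ≠ 0).card ≤
      2 ^ Fintype.card ι := by
  let near (j : ι) := Finset.univ.filter fun q : Fin (N + 1) => |y j - q| < 1
  calc _ ≤ (Fintype.piFinset near).card := by
        refine Finset.card_le_card fun p hp => Fintype.mem_piFinset.2 fun j => ?_
        simpa [near] using abs_lt_one_of_kuhnHat_ne_zero (Finset.mem_filter.1 hp).2 j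
    _ ≤ ∏ _j : ι, 2 := by
        rw [Fintype.card_piFinset]
        exact Finset.prod_le_prod' fun j _ => card_abs_sub_natCast_lt_one_le_two N (y j)
    _ = 2 ^ Fintype.card ι := by simp

end KuhnHat

section TaylorFeatures

variable {ι : Type*} [Fintype ι] {N k m : ℕ}

/-- Position of `x` relative to the node `p / N` of the grid of mesh `1 / N`, in units of the
mesh. -/
def gridOffset (N : ℕ) (p : ι → Fin (N + 1)) (x : ι → ℝ) : ι → ℝ := fun j => N * x j - p j

/-- Approximation by a ReLU network of the nodal function of `p` times the monomial with factors
`α` in the rescaled offset from `p`. -/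
def taylorFeature (k N : ℕ) (p : ι → Fin (N + 1)) (α : Fin m → ι) (x : ι → ℝ) : ℝ :=
  prodApprox k (kuhnHat (gridOffset N p x)) m fun j => gridOffset N p x (α j)

lemma taylorFeature_eq_zero {p : ι → Fin (N + 1)} {x : ι → ℝ}
    (h : kuhnHat (gridOffset N p x) = 0) (k : ℕ) (α : Fin m → ι) : taylorFeature k N p α x = 0 := by
  rw [taylorFeature, h, prodApprox_zero_left]

lemma abs_taylorFeature_sub_le {p : ι → Fin (N + 1)} {x : ι → ℝ}
    (h : kuhnHat (gridOffset N p x) ≠ 0) (k : ℕ) (α : Fin m → ι) :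
    |taylorFeature k N p α x - kuhnHat (gridOffset N p x) * ∏ j, gridOffset N p x (α j)| ≤
      m * (1 / 4) ^ k := by
  refine abs_prodApprox_sub_le ?_ (fun j => (abs_lt_one_of_kuhnHat_ne_zero h (α j)).le) k
  rw [abs_of_nonneg (kuhnHat_nonneg _)]
  exact kuhnHat_le_one _

omit [Fintype ι] in
lemma isReluRealizable_gridOffset (p : ι → Fin (N + 1)) (j : ι) (L : ℕ) :
    IsReluRealizable L 2 (4 * N) (fun x => gridOffset N p x j) := by
  have haffine := ((IsReluRealizable.coord j).smul N).sub (.const 0 0 (p j))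
  refine (haffine.of_depth_zero L).mono le_rfl ?_
  have : (p j : ℝ) ≤ N := by exact_mod_cast (p j).is_le
  rw [Nat.abs_cast, Nat.abs_cast]
  linarith

lemma isReluRealizable_kuhnHat (hN : 1 ≤ N) (p : ι → Fin (N + 1)) :
    IsReluRealizable (Fintype.card ι + 1) (9 * 3 ^ Fintype.card ι) (9 * 3 ^ Fintype.card ι * N)
      (fun x => kuhnHat (gridOffset N p x)) := by
  classical
  have hN' : (1 : ℝ) ≤ N := by exact_mod_cast hN
  have hoffset := isReluRealizable_gridOffset p
  have hpos := IsReluRealizable.fold_max Finset.univ (by positivity) fun j _ => hoffset j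
  have hneg := IsReluRealizable.fold_max Finset.univ (by positivity) fun j _ L => (hoffset j L).neg
  rw [Finset.card_univ] at hpos hneg
  refine ((IsReluRealizable.const _ 0 1).sub (hpos.add hneg)).relu.mono ?_ ?_
  · have : 1 ≤ 3 ^ Fintype.card ι := Nat.one_le_pow _ _ (by lia)
    lia
  · have : (1 : ℝ) ≤ 3 ^ Fintype.card ι := one_le_pow₀ (by norm_num)
    rw [abs_one]
    nlinarith

lemma isReluRealizable_taylorFeature (hN : 1 ≤ N) (hk : 1 ≤ k) (p : ι → Fin (N + 1))
    (α : Fin m → ι) :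
    IsReluRealizable (Fintype.card ι + 1 + m * k) (4 ^ m * (14 * 3 ^ Fintype.card ι))
      ((6 * k) ^ m * (15 * 3 ^ Fintype.card ι * N)) (taylorFeature k N p α) := by
  have hprod := (isReluRealizable_kuhnHat hN p).prodApprox (by positivity)
    (fun j => isReluRealizable_gridOffset p (α j)) hk
  refine hprod.mono (Nat.mul_le_mul_left _ ?_) (mul_le_mul_of_nonneg_left ?_ (by positivity))
  · have : 1 ≤ 3 ^ Fintype.card ι := Nat.one_le_pow _ _ (by lia)
    lia
  · have hN' : (1 : ℝ) ≤ N := by exact_mod_cast hN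
    have : (1 : ℝ) ≤ 3 ^ Fintype.card ι := one_le_pow₀ (by norm_num)
    nlinarith

end TaylorFeatures

section Taylor

variable {E F : Type*} [NormedAddCommGroup E] [NormedSpace ℝ E] [NormedAddCommGroup F]
  [NormedSpace ℝ F] {ι : Type*} [Fintype ι] [DecidableEq ι] {r : ℕ} {A : ℝ}

lemma norm_sub_sum_deriv_le {g : ℕ → ℝ → F}
    (hg : ∀ m < r, ∀ t ∈ Icc (0 : ℝ) 1, HasDerivWithinAt (g m) (g (m + 1) t) (Icc 0 1) t)
    (hA : ∀ t ∈ Icc (0 : ℝ) 1, ‖g r t - g r 0‖ ≤ A) {t : ℝ} (ht : t ∈ Icc (0 : ℝ) 1) :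
    ‖g 0 t - ∑ m ∈ Finset.range (r + 1), (t ^ m / m.factorial) • g m 0‖ ≤ A := by
  induction r generalizing g t with
  | zero => simpa using hA t ht
  | succ r ih =>
    have hderiv : ∀ s ∈ Icc (0 : ℝ) 1, HasDerivWithinAt
        (fun s => g 0 s - ∑ m ∈ Finset.range (r + 2), (s ^ m / m.factorial) • g m 0)
        (g 1 s - ∑ m ∈ Finset.range (r + 1), (s ^ m / m.factorial) • g (m + 1) 0)
        (Icc 0 1) s := by
      intro s hs
      simp only [Finset.sum_range_succ' _ (r + 1), pow_zero]
      refine (hg 0 r.succ_pos s hs).sub (.add_const _ (.fun_sum fun m _ => .smul_const ?_ _))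
      refine ((hasDerivAt_pow (m + 1) s).div_const _).hasDerivWithinAt.congr_deriv ?_
      rw [Nat.factorial_succ, Nat.add_sub_cancel]
      push_cast
      field_simp
    have hmean := (convex_Icc (0 : ℝ) 1).norm_image_sub_le_of_norm_hasDerivWithin_le hderiv
      (fun s hs => ih (fun m hm => hg (m + 1) (by lia)) hA hs) (left_mem_Icc.2 zero_le_one) ht
    have hzero : ∑ m ∈ Finset.range (r + 2), ((0 : ℝ) ^ m / m.factorial) • g m 0 = g 0 0 := by
      simp [Finset.sum_range_succ']
    rw [hzero, sub_self, sub_zero, sub_zero, Real.norm_eq_abs, abs_of_nonneg ht.1] at hmean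
    exact hmean.trans (mul_le_of_le_one_right ((norm_nonneg _).trans (hA t ht)) ht.2)

theorem norm_sub_sum_iteratedFDerivWithin_le {f : E → F} {s : Set E} (hs : Convex ℝ s)
    (hs' : UniqueDiffOn ℝ s) (hf : ContDiffOn ℝ r f s) {c x : E} (hc : c ∈ s) (hx : x ∈ s)
    (hA : ∀ y ∈ segment ℝ c x, ‖iteratedFDerivWithin ℝ r f s y (fun _ => x - c) -
      iteratedFDerivWithin ℝ r f s c (fun _ => x - c)‖ ≤ A) :
    ‖f x - ∑ m ∈ Finset.range (r + 1),
      (1 / m.factorial : ℝ) • iteratedFDerivWithin ℝ m f s c (fun _ => x - c)‖ ≤ A := by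
  let g (m : ℕ) (t : ℝ) : F := iteratedFDerivWithin ℝ m f s (c + t • (x - c)) fun _ => x - c
  have hline : MapsTo (fun t : ℝ => c + t • (x - c)) (Icc 0 1) s :=
    fun t ht => hs.add_smul_sub_mem hc hx ht
  have hderiv : ∀ m < r, ∀ t ∈ Icc (0 : ℝ) 1,
      HasDerivWithinAt (g m) (g (m + 1) t) (Icc 0 1) t := by
    intro m hm t ht
    have hD := (hf.differentiableOn_iteratedFDerivWithin (m := m) (by exact_mod_cast hm) hs' _
      (hline ht)).hasFDerivWithinAt
    have hcurve : HasDerivWithinAt (fun t : ℝ => c + t • (x - c)) (x - c) (Icc 0 1) t := by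
      simpa using (((hasDerivAt_id t).smul_const (x - c)).const_add c).hasDerivWithinAt
    exact (ContinuousMultilinearMap.apply ℝ (fun _ : Fin m => E) F fun _ => x - c).hasFDerivAt
      |>.comp_hasDerivWithinAt t (hD.comp_hasDerivWithinAt t hcurve hline)
  have htaylor := norm_sub_sum_deriv_le hderiv (A := A) (fun t ht => by
    simpa [g] using hA _ (segment_eq_image' ℝ c x ▸ mem_image_of_mem _ ht))
    (right_mem_Icc.2 zero_le_one)
  simpa [g] using htaylor

lemma multilinear_apply_const_eq_sum {m : ℕ}
    (T : ContinuousMultilinearMap ℝ (fun _ : Fin m => ι → ℝ) F) (h : ι → ℝ) :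
    T (fun _ => h) = ∑ α : Fin m → ι, (∏ j, h (α j)) • T (fun j => Pi.single (α j) 1) := by
  conv_lhs => rw [pi_eq_sum_univ' h, ContinuousMultilinearMap.map_sum]
  exact Finset.sum_congr rfl fun α _ => T.map_smul_univ (fun j => h (α j)) _

/-- The partial derivative `∂_{α 0} ⋯ ∂_{α (m-1)} f` within `s`. -/
def partialDerivWithin {m : ℕ} (f : (ι → ℝ) → ℝ) (s : Set (ι → ℝ)) (α : Fin m → ι) (x : ι → ℝ) :
    ℝ :=
  iteratedFDerivWithin ℝ m f s x fun j => Pi.single (α j) 1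

/-- The iterated partial derivatives of order at most `r`, as sequences of coordinates. -/
abbrev TaylorIndex (ι : Type*) (r : ℕ) : Type _ := Σ m : Fin (r + 1), Fin m → ι

/-- Taylor polynomial of `f` at `c`, of degree `r`. It is summed over sequences of coordinates
rather than multi-indices, so the factorial is that of the order. -/
def taylorPoly (f : (ι → ℝ) → ℝ) (s : Set (ι → ℝ)) (r : ℕ) (c x : ι → ℝ) : ℝ :=
  ∑ α : TaylorIndex ι r,
    partialDerivWithin f s α.2 c / (α.1 : ℕ).factorial * ∏ j, (x - c) (α.2 j)

theorem abs_sub_taylorPoly_le {f : (ι → ℝ) → ℝ} {s : Set (ι → ℝ)} (hs : Convex ℝ s)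
    (hs' : UniqueDiffOn ℝ s) (hf : ContDiffOn ℝ r f s) {c x : ι → ℝ} (hc : c ∈ s) (hx : x ∈ s)
    {δ ω : ℝ} (hδ : ‖x - c‖ ≤ δ)
    (hω : ∀ y ∈ segment ℝ c x, ∀ α : Fin r → ι,
      |partialDerivWithin f s α y - partialDerivWithin f s α c| ≤ ω) :
    |f x - taylorPoly f s r c x| ≤ Fintype.card ι ^ r * (δ ^ r * ω) := by
  have hδ₀ : 0 ≤ δ := (norm_nonneg _).trans hδ
  have hosc : ∀ y ∈ segment ℝ c x, ‖iteratedFDerivWithin ℝ r f s y (fun _ => x - c) -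
      iteratedFDerivWithin ℝ r f s c (fun _ => x - c)‖ ≤ Fintype.card ι ^ r * (δ ^ r * ω) := by
    intro y hy
    simp only [multilinear_apply_const_eq_sum, ← Finset.sum_sub_distrib,
      ← smul_sub]
    refine (norm_sum_le_of_le (n := fun _ : Fin r → ι => δ ^ r * ω) _ fun α _ => ?_).trans_eq
      (by simp)
    rw [norm_smul]
    refine mul_le_mul ?_ (hω y hy α) (norm_nonneg _) (by positivity)
    rw [norm_prod]
    exact (Finset.prod_le_prod (fun _ _ => norm_nonneg _) fun j _ =>
      (norm_le_pi_norm _ _).trans hδ).trans_eq (by simp)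
  have htaylor := norm_sub_sum_iteratedFDerivWithin_le hs hs' hf hc hx hosc
  simp only [multilinear_apply_const_eq_sum, Finset.sum_range, Finset.smul_sum] at htaylor
  have hpoly : taylorPoly f s r c x = ∑ m : Fin (r + 1), ∑ α : Fin m → ι,
      (1 / (m : ℕ).factorial : ℝ) • (∏ j, (x - c) (α j)) •
        iteratedFDerivWithin ℝ m f s c fun j => Pi.single (α j) 1 := by
    rw [taylorPoly, Fintype.sum_sigma]
    refine Finset.sum_congr rfl fun m _ => Finset.sum_congr rfl fun α _ => ?_
    rw [smul_eq_mul, smul_eq_mul, partialDerivWithin]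
    ring
  rwa [hpoly]

end Taylor

section Networks

variable {d K L n m : ℕ} {P : ℝ} {w w' : ℕ → ℕ} {W W' : ℕ → ℕ → ℕ → ℝ} {b b' : ℕ → ℕ → ℝ}
  {S : Finset ((Fin d → ℝ) → ℝ)}

/-- Extension of an input vector by zero, the form in which `hiddenLayers` is fed. -/
def padInput (x : Fin d → ℝ) : ℕ → ℝ := fun j => if h : j < d then x ⟨j, h⟩ else 0

/-- The first `L` layers of the network with widths `w`, weights `W` and biases `b` have width at
most `n` and rows of norm at most one, and every function in `S` is a unit of the last of them.
Layers beyond the `L`-th are left free, so that they can be appended one at a time. -/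
structure ComputesLayer (L n : ℕ) (w : ℕ → ℕ) (W : ℕ → ℕ → ℕ → ℝ) (b : ℕ → ℕ → ℝ)
    (S : Finset ((Fin d → ℝ) → ℝ)) : Prop where
  width_zero : w 0 = d
  width_le : ∀ l, 1 ≤ l → l ≤ L → w l ≤ n
  row_norm_le : ∀ l < L, ∀ i < w (l + 1), (∑ j ∈ Finset.range (w l), |W l i j|) + |b l i| ≤ 1
  exists_unit : ∀ f ∈ S, ∃ j < w L, ∀ x, hiddenLayers W b w L (padInput x) j = f x

lemma hiddenLayers_congr (hw : ∀ l ≤ L, w' l = w l) (hW : ∀ l < L, W' l = W l)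
    (hb : ∀ l < L, b' l = b l) (x : ℕ → ℝ) :
    hiddenLayers W' b' w' L x = hiddenLayers W b w L x := by
  induction L with
  | zero => rfl
  | succ L ih =>
    simp only [hiddenLayers, hw L L.le_succ, hW L L.lt_succ_self, hb L L.lt_succ_self,
      ih (fun l hl => hw l (by lia)) (fun l hl => hW l (by lia)) fun l hl => hb l (by lia)]

namespace ComputesLayer

lemma congr (h : ComputesLayer L n w W b S) (hw : ∀ l ≤ L, w' l = w l)
    (hW : ∀ l < L, W' l = W l) (hb : ∀ l < L, b' l = b l) : ComputesLayer L n w' W' b' S where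
  width_zero := (hw 0 L.zero_le).trans h.width_zero
  width_le l hl hlL := (hw l hlL).trans_le (h.width_le l hl hlL)
  row_norm_le l hl i hi := by
    rw [hw l hl.le, hW l hl, hb l hl]
    exact h.row_norm_le l hl i (hw (l + 1) hl ▸ hi)
  exists_unit f hf := by
    simpa only [hiddenLayers_congr hw hW hb, hw L le_rfl] using h.exists_unit f hf

lemma exists_row (h : ComputesLayer L n w W b S) {g : (Fin d → ℝ) → ℝ}
    (hg : IsAffineComb P S g) :
    ∃ (a : ℕ → ℝ) (c : ℝ),
      (∀ x, (∑ j ∈ Finset.range (w L), a j * hiddenLayers W b w L (padInput x) j) + c = g x) ∧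
      (∑ j ∈ Finset.range (w L), |a j|) + |c| ≤ P := by
  classical
  obtain ⟨a, c, hg, hnorm⟩ := hg
  choose! unit hunit heval using h.exists_unit
  have hmaps : ∀ f ∈ S, unit f ∈ Finset.range (w L) := fun f hf => Finset.mem_range.2 (hunit f hf)
  refine ⟨fun j => ∑ f ∈ S with unit f = j, a f, c, fun x => ?_, le_trans ?_ hnorm⟩
  · rw [hg x, ← Finset.sum_fiberwise_of_maps_to hmaps]
    simp only [Finset.sum_mul]
    refine congrArg (· + c) (Finset.sum_congr rfl fun j _ => Finset.sum_congr rfl fun f hf => ?_)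
    obtain ⟨hfS, rfl⟩ := Finset.mem_filter.1 hf
    rw [heval f hfS]
  · rw [← Finset.sum_fiberwise_of_maps_to hmaps]
    gcongr with j
    exact Finset.abs_sum_le_sum_abs _ _

lemma exists_append (h : ComputesLayer L n w W b S) {g : Fin m → (Fin d → ℝ) → ℝ}
    (hg : ∀ i, IsAffineComb P S (g i)) :
    ∃ w' W' b', ComputesLayer L n w' W' b' S ∧ w' (L + 1) = m ∧
      (∀ i < m, (∑ j ∈ Finset.range (w' L), |W' L i j|) + |b' L i| ≤ P) ∧
      ∀ (i : Fin m) x, (∑ j ∈ Finset.range (w' L),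
        W' L i j * hiddenLayers W' b' w' L (padInput x) j) + b' L i = g i x := by
  choose a c heval hnorm using fun i => h.exists_row (hg i)
  let w' := Function.update w (L + 1) m
  let W' := Function.update W L fun i => if hi : i < m then a ⟨i, hi⟩ else 0
  let b' := Function.update b L fun i => if hi : i < m then c ⟨i, hi⟩ else 0
  have hw : ∀ l ≤ L, w' l = w l := fun l hl => Function.update_of_ne (by lia) _ _
  have hW : ∀ l < L, W' l = W l := fun l hl => Function.update_of_ne hl.ne _ _
  have hb : ∀ l < L, b' l = b l := fun l hl => Function.update_of_ne hl.ne _ _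
  refine ⟨w', W', b', h.congr hw hW hb, Function.update_self .., fun i hi => ?_, fun i x => ?_⟩
  · simpa [hw, W', b', hi] using hnorm ⟨i, hi⟩
  · simpa [hiddenLayers_congr hw hW hb, hw, W', b'] using heval i x

end ComputesLayer

lemma IsHiddenLayer.exists_computesLayer (h : IsHiddenLayer L n S) :
    ∃ w W b, ComputesLayer L n w W b S := by
  induction L generalizing S with
  | zero =>
    refine ⟨fun _ => d, 0, 0, rfl, by lia, by lia, fun f hf => ?_⟩
    obtain ⟨j, rfl⟩ := h f hf
    exact ⟨j, j.2, fun x => by simp [hiddenLayers, padInput]⟩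
  | succ L ih =>
    obtain ⟨T, hT, hcard, hS⟩ := h
    obtain ⟨w, W, b, hnet⟩ := ih hT
    choose! u hu hrelu using hS
    obtain ⟨w, W, b, hnet, hwidth, hnorm, heval⟩ := hnet.exists_append (P := 1)
      (g := fun i => u (S.equivFin.symm i)) fun i => hu _ (S.equivFin.symm i).2
    refine ⟨w, W, b, hnet.width_zero, fun l hl hlL => ?_, fun l hl => ?_, fun f hf => ?_⟩
    · rcases hlL.lt_or_eq with hlL | rfl
      · exact hnet.width_le l hl (Nat.lt_succ_iff.1 hlL)
      · exact hwidth.trans_le hcard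
    · rcases (Nat.lt_succ_iff.1 hl).lt_or_eq with hl | rfl
      · exact hnet.row_norm_le l hl
      · exact hwidth ▸ hnorm
    · refine ⟨S.equivFin ⟨f, hf⟩, by rw [hwidth]; exact Fin.is_lt _, fun x => ?_⟩
      simp only [hiddenLayers, heval, Equiv.symm_apply_apply]
      exact (congrFun (hrelu f hf) x).symm

theorem IsHiddenLayer.memNNClass (h : IsHiddenLayer L n S) (hP : 0 ≤ P)
    {φ : (Fin d → ℝ) → Fin K → ℝ} (hφ : ∀ i, IsAffineComb P S fun x => φ x i) :
    MemNNClass d K n L P φ := by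
  obtain ⟨w, W, b, hnet⟩ := h.exists_computesLayer
  obtain ⟨w, W, b, hnet, hwidth, hnorm, heval⟩ := hnet.exists_append hφ
  refine ⟨L, le_rfl, w, W, b, Function.update 1 L P, hnet.width_zero, hwidth, hnet.width_le,
    fun l hl => ?_, fun l => ?_, ?_, fun x i => (heval i x).symm⟩
  · rcases hl.lt_or_eq with hl | rfl
    · simpa [hl.ne] using hnet.row_norm_le l hl
    · simpa [hwidth] using hnorm
  · rcases eq_or_ne l L with rfl | hl <;> simp [*]
  · rw [Finset.prod_eq_one fun l hl => by simp [(Finset.mem_range.1 hl).ne]]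
    simp

theorem memNNClass_sum_mul {κ : Type*} [Fintype κ] {F : κ → (Fin d → ℝ) → ℝ} {p : κ → ℝ} {R : ℝ}
    (hR : 0 ≤ R) (hF : ∀ q, IsReluRealizable L n (p q) (F q)) {c : Fin K → κ → ℝ}
    (hc : ∀ i q, |c i q| * p q ≤ R) :
    MemNNClass d K (Fintype.card κ * n) L (Fintype.card κ * R) fun x i => ∑ q, c i q * F q x := by
  classical
  choose S hS hF using hF
  refine (IsHiddenLayer.biUnion Finset.univ fun q _ => hS q).memNNClass (by positivity) fun i => ?_
  have hsum := IsAffineComb.sum Finset.univ fun q _ => (((hF q).smul (c i q)).mono (hc i q)).subset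
    (Finset.subset_biUnion_of_mem S (Finset.mem_univ q))
  simpa using hsum

lemma MemNNClass.mono_depth {D D' : ℕ} {φ : (Fin d → ℝ) → Fin K → ℝ}
    (h : MemNNClass d K n D P φ) (hD : D ≤ D') : MemNNClass d K n D' P φ := by
  obtain ⟨L, hL, hnet⟩ := h
  exact ⟨L, hL.trans hD, hnet⟩

end Networks

section GluedTaylor

variable {ι : Type*} [Fintype ι] [DecidableEq ι] {k N r : ℕ} {f : (ι → ℝ) → ℝ} {s : Set (ι → ℝ)}
  {x : ι → ℝ} {B ε : ℝ}

/-- The point of the grid of mesh `1 / N` with integer coordinates `p`. -/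
def gridNode (p : ι → Fin (N + 1)) : ι → ℝ := fun j => p j / N

/-- Coefficient of the Taylor polynomial of `f` at the node `p` in the variable `gridOffset N p`,
whence the power of `N`. -/
def taylorCoeff (f : (ι → ℝ) → ℝ) (s : Set (ι → ℝ)) (p : ι → Fin (N + 1)) (α : TaylorIndex ι r) :
    ℝ :=
  partialDerivWithin f s α.2 (gridNode p) / (α.1 : ℕ).factorial / N ^ (α.1 : ℕ)

/-- Taylor polynomials of `f` at the grid nodes, glued with the nodal functions of the grid, with
the products replaced by their approximations by ReLU networks. -/
def gluedTaylor (k N r : ℕ) (f : (ι → ℝ) → ℝ) (s : Set (ι → ℝ)) (x : ι → ℝ) : ℝ :=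
  ∑ q : (ι → Fin (N + 1)) × TaylorIndex ι r,
    taylorCoeff f s q.1 q.2 * taylorFeature k N q.1 q.2.2 x

omit [Fintype ι] [DecidableEq ι] in
lemma gridNode_mem_Icc (p : ι → Fin (N + 1)) : gridNode p ∈ Icc (0 : ι → ℝ) 1 := by
  refine ⟨fun j => by simp only [gridNode, Pi.zero_apply]; positivity, fun j => ?_⟩
  exact div_le_one_of_le₀ (Nat.cast_le.2 (p j).is_le) N.cast_nonneg

omit [Fintype ι] [DecidableEq ι] in
lemma gridOffset_eq_mul_sub_gridNode (hN : N ≠ 0) (p : ι → Fin (N + 1)) (x : ι → ℝ) (j : ι) :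
    gridOffset N p x j = N * (x - gridNode p) j := by
  simp only [gridOffset, gridNode, Pi.sub_apply]
  field_simp

omit [DecidableEq ι] in
lemma norm_sub_gridNode_le (hN : N ≠ 0) {p : ι → Fin (N + 1)}
    (h : kuhnHat (gridOffset N p x) ≠ 0) : ‖x - gridNode p‖ ≤ 1 / N := by
  refine (pi_norm_le_iff_of_nonneg (by positivity)).2 fun j => ?_
  have hj := (abs_lt_one_of_kuhnHat_ne_zero h j).le
  rw [gridOffset_eq_mul_sub_gridNode hN, abs_mul, Nat.abs_cast] at hj
  rwa [Real.norm_eq_abs, le_div_iff₀' (by positivity)]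

lemma taylorPoly_gridNode (hN : N ≠ 0) (p : ι → Fin (N + 1)) :
    taylorPoly f s r (gridNode p) x =
      ∑ α : TaylorIndex ι r, taylorCoeff f s p α * ∏ j, gridOffset N p x (α.2 j) := by
  refine Finset.sum_congr rfl fun α _ => ?_
  simp only [gridOffset_eq_mul_sub_gridNode hN, Finset.prod_mul_distrib, Finset.prod_const,
    Finset.card_univ, Fintype.card_fin, taylorCoeff]
  field_simp

lemma abs_taylorCoeff_le {p : ι → Fin (N + 1)} {α : TaylorIndex ι r}
    (h : |partialDerivWithin f s α.2 (gridNode p)| ≤ B) :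
    |taylorCoeff f s p α| ≤ B / N ^ (α.1 : ℕ) := by
  rw [taylorCoeff, abs_div, abs_div, Nat.abs_cast, abs_pow, Nat.abs_cast]
  gcongr
  exact (div_le_self (abs_nonneg _) (by exact_mod_cast Nat.factorial_pos _)).trans h

lemma abs_kuhnHat_mul_sub_sum_le (hN : N ≠ 0) {p : ι → Fin (N + 1)}
    (hp : kuhnHat (gridOffset N p x) ≠ 0) (hε : |f x - taylorPoly f s r (gridNode p) x| ≤ ε)
    (hB : ∀ α : TaylorIndex ι r, |taylorCoeff f s p α| ≤ B) (k : ℕ) :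
    |kuhnHat (gridOffset N p x) * f x -
        ∑ α : TaylorIndex ι r, taylorCoeff f s p α * taylorFeature k N p α.2 x| ≤
      kuhnHat (gridOffset N p x) * ε +
        Fintype.card (TaylorIndex ι r) * (B * (r * (1 / 4) ^ k)) := by
  set h := kuhnHat (gridOffset N p x)
  let err (α : TaylorIndex ι r) : ℝ :=
    taylorFeature k N p α.2 x - h * ∏ j, gridOffset N p x (α.2 j)
  have hsplit : h * f x - ∑ α : TaylorIndex ι r, taylorCoeff f s p α * taylorFeature k N p α.2 x =
      h * (f x - taylorPoly f s r (gridNode p) x) - ∑ α, taylorCoeff f s p α * err α := by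
    simp only [err, mul_sub, Finset.sum_sub_distrib, taylorPoly_gridNode hN, Finset.mul_sum,
      mul_left_comm h]
    ring
  have herr (α) : |taylorCoeff f s p α * err α| ≤ B * (r * (1 / 4) ^ k) := by
    rw [abs_mul]
    refine mul_le_mul (hB α) ((abs_taylorFeature_sub_le hp k α.2).trans ?_) (abs_nonneg _)
      ((abs_nonneg _).trans (hB α))
    gcongr
    exact α.1.is_le
  rw [hsplit]
  refine (abs_sub _ _).trans (add_le_add ?_ ?_)
  · rw [abs_mul, abs_of_nonneg (kuhnHat_nonneg _)]
    exact mul_le_mul_of_nonneg_left hε (kuhnHat_nonneg _)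
  · refine (Finset.abs_sum_le_sum_abs _ _).trans ((Finset.sum_le_sum fun α _ => herr α).trans_eq ?_)
    rw [Finset.sum_const, Finset.card_univ, nsmul_eq_mul]

theorem abs_sub_gluedTaylor_le (hN : N ≠ 0) (hx : x ∈ Icc (0 : ι → ℝ) 1)
    (hε : ∀ p : ι → Fin (N + 1), kuhnHat (gridOffset N p x) ≠ 0 →
      |f x - taylorPoly f s r (gridNode p) x| ≤ ε)
    (hB : ∀ (p : ι → Fin (N + 1)) (α : TaylorIndex ι r), |taylorCoeff f s p α| ≤ B) (k : ℕ) :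
    |f x - gluedTaylor k N r f s x| ≤
      ε + 2 ^ Fintype.card ι * (Fintype.card (TaylorIndex ι r) * (B * (r * (1 / 4) ^ k))) := by
  set e := Fintype.card (TaylorIndex ι r) * (B * (r * (1 / 4) ^ k))
  have hB₀ : 0 ≤ B := (abs_nonneg _).trans (hB 0 ⟨0, Fin.elim0⟩)
  have hunity : ∑ p : ι → Fin (N + 1), kuhnHat (gridOffset N p x) = 1 :=
    sum_kuhnHat_sub_eq_one (fun j => mul_nonneg N.cast_nonneg (hx.1 j))
      fun j => mul_le_of_le_one_right N.cast_nonneg (hx.2 j)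
  have hnode (p : ι → Fin (N + 1)) : |kuhnHat (gridOffset N p x) * f x -
      ∑ α : TaylorIndex ι r, taylorCoeff f s p α * taylorFeature k N p α.2 x| ≤
      kuhnHat (gridOffset N p x) * ε + if kuhnHat (gridOffset N p x) ≠ 0 then e else 0 := by
    by_cases hp : kuhnHat (gridOffset N p x) = 0
    · simp [hp, taylorFeature_eq_zero hp]
    · rw [if_pos hp]
      exact abs_kuhnHat_mul_sub_sum_le hN hp (hε p hp) (hB p) k
  calc |f x - gluedTaylor k N r f s x|
      = |∑ p : ι → Fin (N + 1), (kuhnHat (gridOffset N p x) * f x -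
          ∑ α : TaylorIndex ι r, taylorCoeff f s p α * taylorFeature k N p α.2 x)| := by
        rw [Finset.sum_sub_distrib, ← Finset.sum_mul, hunity, one_mul, gluedTaylor,
          Fintype.sum_prod_type]
    _ ≤ ∑ p : ι → Fin (N + 1), (kuhnHat (gridOffset N p x) * ε +
          if kuhnHat (gridOffset N p x) ≠ 0 then e else 0) :=
        (Finset.abs_sum_le_sum_abs _ _).trans (Finset.sum_le_sum fun p _ => hnode p)
    _ = ε + (Finset.univ.filter fun p : ι → Fin (N + 1) =>
          kuhnHat (gridOffset N p x) ≠ 0).card * e := by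
        rw [Finset.sum_add_distrib, ← Finset.sum_mul, hunity, one_mul, ← Finset.sum_filter,
          Finset.sum_const, nsmul_eq_mul]
    _ ≤ ε + 2 ^ Fintype.card ι * e := by
        gcongr
        exact_mod_cast card_kuhnHat_sub_ne_zero_le N fun j => N * x j

end GluedTaylor

section HolderClass

variable {d K k N r : ℕ} {B T ν : ℝ} {κ : (Fin d → ℝ) → Fin K → ℝ}

theorem memNNClass_gluedTaylor {s : Set (Fin d → ℝ)} (hN : 1 ≤ N) (hk : 1 ≤ k) (hT : 1 ≤ T)
    (hkN : (k : ℝ) ≤ T * N) (hB : 0 ≤ B)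
    (hκ : ∀ i (p : Fin d → Fin (N + 1)) (α : TaylorIndex (Fin d) r),
      |taylorCoeff (fun x => κ x i) s p α| ≤ B / N ^ (α.1 : ℕ)) :
    MemNNClass d K ((N + 1) ^ d * Fintype.card (TaylorIndex (Fin d) r) * (4 ^ r * (14 * 3 ^ d)))
      (d + 1 + r * k)
      ((N + 1) ^ d * Fintype.card (TaylorIndex (Fin d) r) * (B * (6 * T) ^ r * (15 * 3 ^ d * N)))
      fun x i => gluedTaylor k N r (fun x => κ x i) s x := by
  have hN₀ : (0 : ℝ) < N := by exact_mod_cast hN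
  have hfeature (q : (Fin d → Fin (N + 1)) × TaylorIndex (Fin d) r) :
      IsReluRealizable (d + 1 + r * k) (4 ^ r * (14 * 3 ^ d))
        ((6 * k) ^ (q.2.1 : ℕ) * (15 * 3 ^ d * N)) (taylorFeature k N q.1 q.2.2) := by
    have h := isReluRealizable_taylorFeature hN hk q.1 q.2.2
    rw [Fintype.card_fin] at h
    refine (h.mono ?_ le_rfl).mono_depth (by lia) ?_
    · gcongr
      exacts [by lia, q.2.1.is_le]
    · gcongr
      exact q.2.1.is_le
  have hweight (i) (q : (Fin d → Fin (N + 1)) × TaylorIndex (Fin d) r) :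
      |taylorCoeff (fun x => κ x i) s q.1 q.2| * ((6 * k) ^ (q.2.1 : ℕ) * (15 * 3 ^ d * N)) ≤
        B * (6 * T) ^ r * (15 * 3 ^ d * N) := by
    have hratio : (6 * k / N : ℝ) ^ (q.2.1 : ℕ) ≤ (6 * T) ^ r := by
      refine (pow_le_pow_left₀ (by positivity) ?_ _).trans
        (pow_le_pow_right₀ (by linarith) q.2.1.is_le)
      rw [div_le_iff₀ hN₀]
      linarith
    calc _ ≤ B / N ^ (q.2.1 : ℕ) * ((6 * k) ^ (q.2.1 : ℕ) * (15 * 3 ^ d * N)) := by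
          gcongr
          exact hκ i q.1 q.2
      _ = B * (6 * k / N : ℝ) ^ (q.2.1 : ℕ) * (15 * 3 ^ d * N) := by
          rw [div_pow]
          ring
      _ ≤ B * (6 * T) ^ r * (15 * 3 ^ d * N) := by gcongr
  simpa only [gluedTaylor, Fintype.card_prod, Fintype.card_fun, Fintype.card_fin, Nat.cast_mul,
    Nat.cast_pow, Nat.cast_add, Nat.cast_one]
    using memNNClass_sum_mul (by positivity) hfeature hweight

lemma uniqueDiffOn_unitCube {ι : Type*} : UniqueDiffOn ℝ (Icc (0 : ι → ℝ) 1) := by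
  rw [← pi_univ_Icc]
  exact UniqueDiffOn.univ_pi fun _ => uniqueDiffOn_Icc zero_lt_one

namespace MemHolderClass

lemma abs_taylorCoeff_le (hκ : MemHolderClass r ν d K B κ) (i : Fin K) (p : Fin d → Fin (N + 1))
    (α : TaylorIndex (Fin d) r) :
    |taylorCoeff (fun x => κ x i) (Icc 0 1) p α| ≤ B / N ^ (α.1 : ℕ) :=
  _root_.abs_taylorCoeff_le ((hκ i).2.1 α.1 α.1.is_le _ (gridNode_mem_Icc p) α.2)

lemma nonneg (hκ : MemHolderClass r ν d K B κ) (i : Fin K) : 0 ≤ B :=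
  (abs_nonneg _).trans ((hκ i).2.1 0 r.zero_le 0 ⟨le_rfl, zero_le_one⟩ Fin.elim0)

lemma abs_sub_taylorPoly_le (hκ : MemHolderClass r ν d K B κ) (hν : 0 < ν) (i : Fin K)
    {c x : Fin d → ℝ} (hc : c ∈ Icc 0 1) (hx : x ∈ Icc 0 1) {δ : ℝ} (hδ : ‖x - c‖ ≤ δ) :
    |κ x i - taylorPoly (fun x => κ x i) (Icc 0 1) r c x| ≤ d ^ r * (δ ^ r * (B * δ ^ ν)) := by
  have hB := hκ.nonneg i
  have hδ₀ : 0 ≤ δ := (norm_nonneg _).trans hδ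
  have hosc : ∀ y ∈ segment ℝ c x, ∀ α : Fin r → Fin d,
      |partialDerivWithin (fun x => κ x i) (Icc 0 1) α y -
        partialDerivWithin (fun x => κ x i) (Icc 0 1) α c| ≤ B * δ ^ ν := by
    intro y hy α
    rcases eq_or_ne y c with rfl | hne
    · simpa using mul_nonneg hB (Real.rpow_nonneg hδ₀ ν)
    · refine ((hκ i).2.2 y ((convex_Icc 0 1).segment_subset hc hx hy) c hc hne α).trans ?_
      have hyδ : ‖y - c‖ ≤ δ := (norm_sub_le_of_mem_segment hy).trans hδ
      gcongr
  simpa using _root_.abs_sub_taylorPoly_le (convex_Icc 0 1) uniqueDiffOn_unitCube (hκ i).1 hc hx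
    hδ hosc

theorem abs_sub_gluedTaylor_le (hκ : MemHolderClass r ν d K B κ) (hν : 0 < ν) (hN : 1 ≤ N)
    {x : Fin d → ℝ} (hx : x ∈ Icc 0 1) (i : Fin K) (k : ℕ) :
    |κ x i - gluedTaylor k N r (fun x => κ x i) (Icc 0 1) x| ≤
      d ^ r * B / (N : ℝ) ^ (r + ν) +
        2 ^ d * (Fintype.card (TaylorIndex (Fin d) r) * (B * r)) / 2 ^ (2 * k) := by
  have hB := hκ.nonneg i
  have hN₀ : (0 : ℝ) < N := by exact_mod_cast hN
  have hcoeff (p : Fin d → Fin (N + 1)) (α : TaylorIndex (Fin d) r) :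
      |taylorCoeff (fun x => κ x i) (Icc 0 1) p α| ≤ B :=
    (hκ.abs_taylorCoeff_le i p α).trans
      (div_le_self hB (one_le_pow₀ (by exact_mod_cast hN)))
  refine (_root_.abs_sub_gluedTaylor_le (by lia) hx (fun p hp => hκ.abs_sub_taylorPoly_le hν i
    (gridNode_mem_Icc p) hx (norm_sub_gridNode_le (by lia) hp)) hcoeff k).trans_eq ?_
  rw [Fintype.card_fin, Real.rpow_add hN₀, Real.rpow_natCast, one_div, Real.inv_rpow hN₀.le,
    pow_mul, div_pow]
  norm_num
  ring

end MemHolderClass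

end HolderClass

lemma exists_nat_le_two_mul_rpow {τ : ℝ} (hτ : 0 < τ) (k : ℕ) :
    ∃ N : ℕ, 1 ≤ N ∧ (2 : ℝ) ^ (2 * k / τ) ≤ N ∧ N ≤ 2 * (2 : ℝ) ^ (2 * k / τ) ∧
      k ≤ (1 + τ) * N := by
  set X : ℝ := 2 ^ (2 * k / τ) with hX
  have hX₁ : 1 ≤ X := Real.one_le_rpow one_le_two (by positivity)
  have hXN : X ≤ ⌈X⌉₊ := Nat.le_ceil X
  have hk : k / τ ≤ X := by
    have hlog : 1 / 2 ≤ Real.log 2 := by linarith [Real.log_two_gt_d9]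
    rw [hX, Real.rpow_def_of_pos two_pos]
    calc k / τ = 1 / 2 * (2 * k / τ) := by ring
      _ ≤ Real.log 2 * (2 * k / τ) := by gcongr
      _ ≤ _ := by linarith [Real.add_one_le_exp (Real.log 2 * (2 * k / τ))]
  have hNX : ⌈X⌉₊ < X + 1 := Nat.ceil_lt_add_one (zero_le_one.trans hX₁)
  refine ⟨⌈X⌉₊, by exact_mod_cast hX₁.trans hXN, hXN, by linarith, ?_⟩
  rw [div_le_iff₀ hτ] at hk
  nlinarith

lemma sqrt_integral_unitCube_sum_sq_le {d K : ℕ} {g : (Fin d → ℝ) → Fin K → ℝ} {ε : ℝ} (hε : 0 ≤ ε)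
    (h : ∀ x ∈ Icc (0 : Fin d → ℝ) 1, ∀ i, |g x i| ≤ ε) :
    √(∫ x in Icc (0 : Fin d → ℝ) 1, ∑ i, g x i ^ 2) ≤ ε * √K := by
  have hvol : volume.real (Icc (0 : Fin d → ℝ) 1) = 1 := by
    simp [measureReal_def, Real.volume_Icc_pi]
  have hbound : ∀ x ∈ Icc (0 : Fin d → ℝ) 1, ‖∑ i, g x i ^ 2‖ ≤ ε ^ 2 * K := by
    intro x hx
    refine (norm_sum_le_of_le (n := fun _ => ε ^ 2) _ fun i _ => ?_).trans_eq (by simp [mul_comm])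
    rw [norm_pow, Real.norm_eq_abs]
    exact pow_le_pow_left₀ (abs_nonneg _) (h x hx i) 2
  have hfin : volume (Icc (0 : Fin d → ℝ) 1) < ⊤ := isCompact_Icc.measure_lt_top
  have hint := norm_setIntegral_le_of_norm_le_const hfin hbound
  rw [hvol, mul_one] at hint
  refine (Real.sqrt_le_sqrt ((le_abs_self _).trans hint)).trans_eq ?_
  rw [Real.sqrt_mul (sq_nonneg ε), Real.sqrt_sq hε]

theorem exists_memNNClass_of_grid (d r : ℕ) {ν B T : ℝ} (hν : 0 < ν) (hB : 0 ≤ B)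
    (hT : 1 ≤ T) :
    ∃ C : ℝ, 0 < C ∧ ∀ K k N : ℕ, 1 ≤ k → 1 ≤ N → k ≤ T * N →
      ∀ κ : (Fin d → ℝ) → Fin K → ℝ, MemHolderClass r ν d K B κ →
      ∃ (𝒲 : ℕ) (M : ℝ) (φ : (Fin d → ℝ) → Fin K → ℝ),
        MemNNClass d K 𝒲 (d + 1 + r * k) M φ ∧ 𝒲 ≤ C * (N : ℝ) ^ d ∧ M ≤ C * (N : ℝ) ^ (d + 1) ∧
        ∀ x ∈ Icc (0 : Fin d → ℝ) 1, ∀ i,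
          |κ x i - φ x i| ≤ C * (1 / (N : ℝ) ^ (r + ν) + 1 / 2 ^ (2 * k)) := by
  set A : ℝ := (Fintype.card (TaylorIndex (Fin d) r) : ℝ)
  let C₁ : ℝ := 2 ^ d * A * (4 ^ r * (14 * 3 ^ d))
  let C₂ : ℝ := 2 ^ d * A * (B * (6 * T) ^ r * (15 * 3 ^ d))
  let C₃ : ℝ := d ^ r * B + 2 ^ d * (A * (B * r))
  have hC₁ : 0 ≤ C₁ := by positivity
  have hC₂ : 0 ≤ C₂ := by positivity
  have hC₃ : 0 ≤ C₃ := by positivity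
  refine ⟨1 + C₁ + C₂ + C₃, by positivity, fun K k N hk hN hkN κ hκ => ?_⟩
  have hN₁ : (1 : ℝ) ≤ N := by exact_mod_cast hN
  have hnodes : (N + 1 : ℝ) ^ d ≤ 2 ^ d * N ^ d := by
    rw [← mul_pow]
    gcongr
    linarith
  refine ⟨_, _, _, memNNClass_gluedTaylor hN hk hT hkN hB hκ.abs_taylorCoeff_le,
    ?_, ?_, fun x hx i => (hκ.abs_sub_gluedTaylor_le hν hN hx i k).trans ?_⟩
  · push_cast
    calc (N + 1 : ℝ) ^ d * A * (4 ^ r * (14 * 3 ^ d))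
        ≤ 2 ^ d * N ^ d * A * (4 ^ r * (14 * 3 ^ d)) := by gcongr
      _ = C₁ * N ^ d := by ring
      _ ≤ _ := by gcongr; linarith
  · calc (N + 1 : ℝ) ^ d * A * (B * (6 * T) ^ r * (15 * 3 ^ d * N))
        ≤ 2 ^ d * N ^ d * A * (B * (6 * T) ^ r * (15 * 3 ^ d * N)) := by gcongr
      _ = C₂ * N ^ (d + 1) := by ring
      _ ≤ _ := by gcongr; linarith
  · calc d ^ r * B / (N : ℝ) ^ (r + ν) + 2 ^ d * (A * (B * r)) / 2 ^ (2 * k)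
        ≤ C₃ / (N : ℝ) ^ (r + ν) + C₃ / 2 ^ (2 * k) := by
          gcongr
          exacts [le_add_of_nonneg_right (by positivity), le_add_of_nonneg_left (by positivity)]
      _ = C₃ * (1 / (N : ℝ) ^ (r + ν) + 1 / 2 ^ (2 * k)) := by ring
      _ ≤ _ := by gcongr; linarith

theorem holder_relu_network_approximation_general (d r : ℕ) {ν B : ℝ} (hν : 0 < ν) (hB : 0 ≤ B) :
    ∃ C : ℝ, 0 < C ∧ ∀ K k : ℕ, 1 ≤ k →
      ∀ κ : (Fin d → ℝ) → Fin K → ℝ, MemHolderClass r ν d K B κ →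
      ∃ (𝒲 : ℕ) (M : ℝ) (φ : (Fin d → ℝ) → Fin K → ℝ),
        MemNNClass d K 𝒲 (d + 1 + r * k) M φ ∧
        𝒲 ≤ C * (2 : ℝ) ^ (2 * (d : ℝ) * k / (r + ν)) ∧
        M ≤ C * (2 : ℝ) ^ (2 * ((d : ℝ) + 1) * k / (r + ν)) ∧
        ∀ x ∈ Icc (0 : Fin d → ℝ) 1, ∀ i, |κ x i - φ x i| ≤ C / 2 ^ (2 * k) := by
  have hτ : 0 < r + ν := by positivity
  obtain ⟨C, hC, happrox⟩ :=
    exists_memNNClass_of_grid d r hν hB (T := 1 + (r + ν)) (by linarith)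
  refine ⟨2 ^ (d + 1) * C, by positivity, fun K k hk κ hκ => ?_⟩
  obtain ⟨N, hN, hXN, hNX, hkN⟩ := exists_nat_le_two_mul_rpow hτ k
  obtain ⟨𝒲, M, φ, hφ, h𝒲, hM, herr⟩ := happrox K k N hk hN hkN κ hκ
  have hX (a : ℝ) : (2 : ℝ) ^ (2 * a * k / (r + ν)) = (2 ^ (2 * k / (r + ν))) ^ a := by
    rw [← Real.rpow_mul two_pos.le]
    ring_nf
  have herr_le : 1 / (N : ℝ) ^ (r + ν) ≤ 1 / 2 ^ (2 * k) := by
    have hXτ : (2 : ℝ) ^ (2 * k) = (2 ^ (2 * k / (r + ν))) ^ (r + ν) := by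
      rw [← Real.rpow_mul two_pos.le, div_mul_cancel₀ _ hτ.ne']
      exact_mod_cast (Real.rpow_natCast 2 (2 * k)).symm
    rw [hXτ]
    gcongr
  rw [hX, hX, Real.rpow_natCast, ← Nat.cast_add_one, Real.rpow_natCast]
  set X : ℝ := 2 ^ (2 * k / (r + ν))
  refine ⟨𝒲, M, φ, hφ, ?_, ?_, fun x hx i => (herr x hx i).trans ?_⟩
  · calc (𝒲 : ℝ) ≤ C * (2 * X) ^ d := h𝒲.trans (by gcongr)
      _ = 2 ^ d * C * X ^ d := by ring
      _ ≤ 2 ^ (d + 1) * C * X ^ d := by gcongr <;> norm_num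
  · calc M ≤ C * (2 * X) ^ (d + 1) := hM.trans (by gcongr)
      _ = 2 ^ (d + 1) * C * X ^ (d + 1) := by ring
  · calc C * (1 / (N : ℝ) ^ (r + ν) + 1 / 2 ^ (2 * k))
        ≤ C * (1 / 2 ^ (2 * k) + 1 / 2 ^ (2 * k)) := by gcongr
      _ = 2 ^ 1 * C / 2 ^ (2 * k) := by ring
      _ ≤ 2 ^ (d + 1) * C / 2 ^ (2 * k) := by gcongr <;> norm_num

/-- Approximation of Hölder maps `κ ∈ C_{τ,d,K,B}`, `τ = r + ν`, by norm-constrained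
ReLU networks: there is `C > 0` depending only on `d`, `τ` and `B` such that for every
`K ≥ 1`, `k ≥ 1` and `κ ∈ C_{τ,d,K,B}` there is `φ ∈ F_{d,K}(𝒲, D, M)` with width
`𝒲 ≤ C 2^{2dk/τ} k`, depth `D = (k+1)(d+r)+2`, norm constraint `M ≤ C 2^{2(d+1)k/τ}`,
and `‖κ − φ‖_{L²([0,1]^d)} ≤ C √K 2^{−2k}` (equivalently,
`‖κ − φ‖_{L²} ≲ √K M^{−τ/(d+1)}` with `𝒲 ≍ M^{d/(d+1)} log M` and `D ≍ log M`). -/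
theorem holder_relu_network_approximation
    (d : ℕ) (hd : 1 ≤ d) (r : ℕ) (ν : ℝ) (hν : ν ∈ Set.Ioc (0 : ℝ) 1)
    (τ : ℝ) (hτ : τ = (r : ℝ) + ν) (B : ℝ) (hB : 0 < B) :
    ∃ C : ℝ, 0 < C ∧
      ∀ K : ℕ, 1 ≤ K → ∀ k : ℕ, 1 ≤ k →
        ∀ κ : (Fin d → ℝ) → Fin K → ℝ, MemHolderClass r ν d K B κ →
          ∃ (𝒲 : ℕ) (M : ℝ) (φ : (Fin d → ℝ) → Fin K → ℝ),
            MemNNClass d K 𝒲 ((k + 1) * (d + r) + 2) M φ ∧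
            (𝒲 : ℝ) ≤ C * (2 : ℝ) ^ (2 * (d : ℝ) * k / τ) * k ∧
            M ≤ C * (2 : ℝ) ^ (2 * ((d : ℝ) + 1) * k / τ) ∧
            Real.sqrt (∫ x in Set.Icc (0 : Fin d → ℝ) 1, ∑ i, (κ x i - φ x i) ^ 2)
              ≤ C * Real.sqrt K / 2 ^ (2 * k) := by
  subst hτ
  obtain ⟨C, hC, happrox⟩ := holder_relu_network_approximation_general d r hν.1 hB.le
  refine ⟨C, hC, fun K _ k hk κ hκ => ?_⟩
  obtain ⟨𝒲, M, φ, hφ, h𝒲, hM, herr⟩ := happrox K k hk κ hκ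
  have hdepth : d + 1 + r * k ≤ (k + 1) * (d + r) + 2 := by nlinarith
  refine ⟨𝒲, M, φ, hφ.mono_depth hdepth, ?_, hM, ?_⟩
  · exact h𝒲.trans (le_mul_of_one_le_right (by positivity) (by exact_mod_cast hk))
  · exact (sqrt_integral_unitCube_sum_sq_le (by positivity) herr).trans_eq (div_mul_eq_mul_div ..)

end
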